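/- Let (G, u) be a strongly semisimple unital ℓ-group, let I₁, …, Iₙ be finitely many principal ℓ-ideals of G, and let g₁, …, gₙ ∈ G be such that gᵢ - gⱼ ∈ m for all i, j ∈ {1, …, n} and every maximal ℓ-ideal m of G containing Iᵢ ∨ Iⱼ. Then there exists g ∈ G such that g - gᵢ ∈ Iᵢ for each i ∈ {1, …, n}. (Strongly Semisimple Chinese Remainder Theorem.) -/

import Mathlib

/-- An ℓ-ideal of an ℓ-group `G`: an additive subgroup `I` such that `g ∈ I`
whenever `|g| ≤ |h|` for some `h ∈ I`. -/
def IsLIdeal {G : Type*} [Lattice G] [AddCommGroup G]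
    [CovariantClass G G (· + ·) (· ≤ ·)] (I : AddSubgroup G) : Prop :=
  ∀ ⦃g h : G⦄, h ∈ I → |g| ≤ |h| → g ∈ I

/-- The ℓ-ideal generated by a subset `S` of `G`: the smallest ℓ-ideal containing `S`. -/
def lIdealGen {G : Type*} [Lattice G] [AddCommGroup G]
    [CovariantClass G G (· + ·) (· ≤ ·)] (S : Set G) : AddSubgroup G :=
  sInf {I : AddSubgroup G | IsLIdeal I ∧ S ⊆ ↑I}

/-- A prime ℓ-ideal: a proper ℓ-ideal `p` such that `a ⊓ b = 0` implies `a ∈ p` or `b ∈ p`. -/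
def IsPrimeLIdeal {G : Type*} [Lattice G] [AddCommGroup G]
    [CovariantClass G G (· + ·) (· ≤ ·)] (p : AddSubgroup G) : Prop :=
  IsLIdeal p ∧ p ≠ ⊤ ∧ ∀ a b : G, a ⊓ b = 0 → a ∈ p ∨ b ∈ p

/-- A maximal ℓ-ideal: a proper ℓ-ideal maximal under inclusion among proper ℓ-ideals. -/
def IsMaximalLIdeal {G : Type*} [Lattice G] [AddCommGroup G]
    [CovariantClass G G (· + ·) (· ≤ ·)] (m : AddSubgroup G) : Prop :=
  IsLIdeal m ∧ m ≠ ⊤ ∧ ∀ I : AddSubgroup G, IsLIdeal I → I ≠ ⊤ → m ≤ I → I = m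

/-- A (strong order) unit of `G`. -/
def IsStrongUnit {G : Type*} [Lattice G] [AddCommGroup G]
    [CovariantClass G G (· + ·) (· ≤ ·)] (u : G) : Prop :=
  0 ≤ u ∧ ∀ g : G, ∃ n : ℕ, g ≤ n • u

/-- `G` is strongly semisimple: for every `h ∈ G`, the intersection of all maximal
ℓ-ideals containing `h` equals the principal ℓ-ideal generated by `h`. -/
def IsStronglySemisimple (G : Type*) [Lattice G] [AddCommGroup G]
    [CovariantClass G G (· + ·) (· ≤ ·)] : Prop :=
  ∀ h : G, sInf {m : AddSubgroup G | IsMaximalLIdeal m ∧ h ∈ m} = lIdealGen {h}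

/-!
For ℓ-ideals `I` and `J`, truncating `x` to the interval `[-|a|, |a|]` splits any `x` with
`|x| ≤ |a| + |b|` into a part in `I` and a part in `J`, so `I ∨ J` is the group join `I ⊔ J`. If
the differences `gᵢ - gⱼ` lie in `Iᵢ ⊔ Iⱼ`, finiteness gives single bounds `cᵢ ∈ Iᵢ` with
`|gᵢ - gⱼ| ≤ cᵢ + cⱼ`: the intervals `[gᵢ - cᵢ, gᵢ + cᵢ]` meet pairwise, and the supremum of their
lower ends lies in all of them. Since a join of two principal ℓ-ideals is principal, strong
semisimplicity turns the condition on the maximal ℓ-ideals above `Iᵢ ∨ Iⱼ` into membership in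
`Iᵢ ∨ Iⱼ`.
-/

section

variable {G : Type*} [Lattice G] [AddCommGroup G] [AddLeftMono G]

theorem exists_add_eq_of_abs_le_add {x a b : G} (ha : 0 ≤ a) (hb : 0 ≤ b) (hx : |x| ≤ a + b) :
    ∃ y z : G, |y| ≤ a ∧ |z| ≤ b ∧ y + z = x := by
  obtain ⟨hx_le, hneg_le⟩ := abs_le'.1 hx
  refine ⟨(x ⊓ a) ⊔ -a, x - ((x ⊓ a) ⊔ -a), abs_le'.2 ⟨?_, ?_⟩, abs_le'.2 ⟨?_, ?_⟩,
    add_sub_cancel _ _⟩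
  · exact sup_le inf_le_right (neg_le_self ha)
  · exact neg_le.1 le_sup_right
  · have hx_sub : x - b ≤ x ⊓ a := le_inf (sub_le_self x hb) (sub_le_iff_le_add.2 hx_le)
    exact sub_le_comm.1 (hx_sub.trans le_sup_left)
  · have hneg_a : -a ≤ b + x := neg_le_iff_add_nonneg'.2 <| by
      simpa only [add_assoc] using neg_le_iff_add_nonneg.1 hneg_le
    rw [neg_sub, sub_le_iff_le_add]
    exact sup_le (inf_le_left.trans (le_add_of_nonneg_left hb)) hneg_a

theorem exists_forall_abs_sub_le {ι : Type*} [Finite ι] {g c : ι → G}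
    (h : ∀ i j, |g i - g j| ≤ c i + c j) : ∃ x : G, ∀ i, |x - g i| ≤ c i := by
  have := Fintype.ofFinite ι
  rcases isEmpty_or_nonempty ι with _ | _
  · exact ⟨0, isEmptyElim⟩
  refine ⟨Finset.univ.sup' Finset.univ_nonempty fun j => g j - c j, fun i => abs_le'.2 ⟨?_, ?_⟩⟩
  · refine sub_le_iff_le_add.2 (Finset.sup'_le _ _ fun j _ => ?_)
    calc g j - c j = (g j - g i) + (g i - c j) := by abel
      _ ≤ (c j + c i) + (g i - c j) := by gcongr; exact (le_abs_self _).trans (h j i)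
      _ = c i + g i := by abel
  · rw [neg_sub, sub_le_comm]
    exact Finset.le_sup' (fun j => g j - c j) (Finset.mem_univ i)

theorem isLIdeal_lIdealGen (S : Set G) : IsLIdeal (lIdealGen S) := fun _ _ hh hgh =>
  AddSubgroup.mem_sInf.2 fun I hI => hI.1 (AddSubgroup.mem_sInf.1 hh I hI) hgh

theorem subset_lIdealGen (S : Set G) : S ⊆ lIdealGen S := fun _ hx =>
  AddSubgroup.mem_sInf.2 fun _ hI => hI.2 hx

namespace IsLIdeal

variable {I J : AddSubgroup G}

theorem lIdealGen_le_iff (hI : IsLIdeal I) {S : Set G} : lIdealGen S ≤ I ↔ S ⊆ I :=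
  ⟨(subset_lIdealGen S).trans, fun hS => sInf_le ⟨hI, hS⟩⟩

theorem lIdealGen_singleton_le_iff (hI : IsLIdeal I) {a : G} : lIdealGen {a} ≤ I ↔ a ∈ I :=
  hI.lIdealGen_le_iff.trans Set.singleton_subset_iff

theorem mem_of_abs_le (hI : IsLIdeal I) {x a : G} (ha : a ∈ I) (hx : |x| ≤ a) : x ∈ I :=
  hI ha (hx.trans (le_abs_self a))

theorem abs_mem (hI : IsLIdeal I) {a : G} (ha : a ∈ I) : |a| ∈ I :=
  hI ha (abs_abs a).le

theorem sup (hI : IsLIdeal I) (hJ : IsLIdeal J) : IsLIdeal (I ⊔ J) := by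
  intro x h hh hxh
  obtain ⟨a, ha, b, hb, rfl⟩ := AddSubgroup.mem_sup.1 hh
  obtain ⟨y, z, hy, hz, rfl⟩ :=
    exists_add_eq_of_abs_le_add (abs_nonneg a) (abs_nonneg b) (hxh.trans (abs_add_le a b))
  exact AddSubgroup.add_mem_sup (hI ha hy) (hJ hb hz)

theorem lIdealGen_union (hI : IsLIdeal I) (hJ : IsLIdeal J) :
    lIdealGen ((I : Set G) ∪ J) = I ⊔ J := by
  refine le_antisymm ?_ ?_
  · exact (hI.sup hJ).lIdealGen_le_iff.2
      (Set.union_subset (SetLike.coe_subset_coe.2 le_sup_left)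
        (SetLike.coe_subset_coe.2 le_sup_right))
  · exact sup_le (Set.subset_union_left.trans (subset_lIdealGen _))
      (Set.subset_union_right.trans (subset_lIdealGen _))

end IsLIdeal

theorem lIdealGen_singleton_sup_lIdealGen_singleton (a b : G) :
    lIdealGen {a} ⊔ lIdealGen {b} = lIdealGen {|a| + |b|} := by
  have ha : a ∈ lIdealGen {a} := subset_lIdealGen {a} rfl
  have hb : b ∈ lIdealGen {b} := subset_lIdealGen {b} rfl
  have hab : |a| + |b| ∈ lIdealGen {|a| + |b|} := subset_lIdealGen {|a| + |b|} rfl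
  have hgen := isLIdeal_lIdealGen {|a| + |b|}
  refine le_antisymm (sup_le ?_ ?_) ?_
  · exact hgen.lIdealGen_singleton_le_iff.2
      (hgen.mem_of_abs_le hab (le_add_of_nonneg_right (abs_nonneg b)))
  · exact hgen.lIdealGen_singleton_le_iff.2
      (hgen.mem_of_abs_le hab (le_add_of_nonneg_left (abs_nonneg a)))
  · have hIa := isLIdeal_lIdealGen {a}
    have hIb := isLIdeal_lIdealGen {b}
    exact (hIa.sup hIb).lIdealGen_singleton_le_iff.2
      (AddSubgroup.add_mem_sup (hIa.abs_mem ha) (hIb.abs_mem hb))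

theorem exists_forall_mem_abs_sub_le_add {ι : Type*} [Finite ι] {I : ι → AddSubgroup G}
    (hI : ∀ i, IsLIdeal (I i)) {g : ι → G} (hg : ∀ i j, g i - g j ∈ I i ⊔ I j) :
    ∃ c : ι → G, (∀ i, c i ∈ I i) ∧ ∀ i j, |g i - g j| ≤ c i + c j := by
  have := Fintype.ofFinite ι
  choose a ha b hb hab using fun i j => AddSubgroup.mem_sup.1 (hg i j)
  refine ⟨fun i => ∑ k, (|a i k| + |b k i|), fun i => ?_, fun i j => ?_⟩
  · exact (I i).sum_mem fun k _ =>
      (I i).add_mem ((hI i).abs_mem (ha i k)) ((hI i).abs_mem (hb k i))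
  · have hterm : ∀ i k, 0 ≤ |a i k| + |b k i| := fun i k => by positivity
    calc |g i - g j| = |a i j + b i j| := by rw [hab]
      _ ≤ |a i j| + |b i j| := abs_add_le _ _
      _ ≤ (|a i j| + |b j i|) + (|a j i| + |b i j|) :=
        add_le_add (le_add_of_nonneg_right (abs_nonneg _)) (le_add_of_nonneg_left (abs_nonneg _))
      _ ≤ ∑ k, (|a i k| + |b k i|) + ∑ k, (|a j k| + |b k j|) :=
        add_le_add (Finset.single_le_sum (fun k _ => hterm i k) (Finset.mem_univ j))
          (Finset.single_le_sum (fun k _ => hterm j k) (Finset.mem_univ i))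

theorem exists_forall_sub_mem_of_forall_sub_mem_sup {ι : Type*} [Finite ι]
    {I : ι → AddSubgroup G} (hI : ∀ i, IsLIdeal (I i)) {g : ι → G}
    (hg : ∀ i j, g i - g j ∈ I i ⊔ I j) : ∃ x : G, ∀ i, x - g i ∈ I i := by
  obtain ⟨c, hc, hgc⟩ := exists_forall_mem_abs_sub_le_add hI hg
  obtain ⟨x, hx⟩ := exists_forall_abs_sub_le hgc
  exact ⟨x, fun i => (hI i).mem_of_abs_le (hc i) (hx i)⟩

theorem IsStronglySemisimple.mem_lIdealGen_singleton (hG : IsStronglySemisimple G) {a x : G}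
    (hx : ∀ m : AddSubgroup G, IsMaximalLIdeal m → lIdealGen {a} ≤ m → x ∈ m) :
    x ∈ lIdealGen {a} := by
  rw [← hG a]
  exact AddSubgroup.mem_sInf.2 fun m ⟨hm, ha⟩ => hx m hm (hm.1.lIdealGen_singleton_le_iff.2 ha)

theorem strongly_semisimple_crt_general (hss : IsStronglySemisimple G) {ι : Type*} [Finite ι]
    (I : ι → AddSubgroup G) (hI : ∀ i, ∃ a : G, I i = lIdealGen {a}) (g : ι → G)
    (hcomp : ∀ i j, ∀ m : AddSubgroup G, IsMaximalLIdeal m →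
      lIdealGen ((I i : Set G) ∪ (I j : Set G)) ≤ m → g i - g j ∈ m) :
    ∃ g' : G, ∀ i, g' - g i ∈ I i := by
  choose a ha using hI
  have hideal : ∀ i, IsLIdeal (I i) := fun i => ha i ▸ isLIdeal_lIdealGen {a i}
  refine exists_forall_sub_mem_of_forall_sub_mem_sup hideal fun i j => ?_
  have hprincipal : I i ⊔ I j = lIdealGen {|a i| + |a j|} := by
    rw [ha i, ha j, lIdealGen_singleton_sup_lIdealGen_singleton]
  rw [hprincipal]
  refine hss.mem_lIdealGen_singleton fun m hm hle => hcomp i j m hm ?_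
  rwa [(hideal i).lIdealGen_union (hideal j), hprincipal]

end

/-- **Strongly Semisimple Chinese Remainder Theorem.** -/
theorem strongly_semisimple_crt {G : Type*} [Lattice G] [AddCommGroup G]
    [CovariantClass G G (· + ·) (· ≤ ·)] (u : G) (hu : IsStrongUnit u)
    (hss : IsStronglySemisimple G) {n : ℕ}
    (I : Fin n → AddSubgroup G) (hI : ∀ i, ∃ a : G, I i = lIdealGen {a})
    (g : Fin n → G)
    (hcomp : ∀ i j, ∀ m : AddSubgroup G, IsMaximalLIdeal m →
      lIdealGen ((I i : Set G) ∪ (I j : Set G)) ≤ m → g i - g j ∈ m) :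
    ∃ g' : G, ∀ i, g' - g i ∈ I i :=
  strongly_semisimple_crt_general hss I hI g hcomp
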